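/- Let 𝒢 be a group structure on {1,…,p} with positive weights (η_g) such that every index belongs to at least one group, let Ω(w) = Σ_{g∈𝒢} η_g ‖w_g‖_∞, let λ > 0 and u ∈ ℝ^p. Then the optimal value of the proximal problem min_{w∈ℝ^p} ½‖u − w‖₂² + λΩ(w) plus the optimal value of the dual problem min ½‖u − Σ_{g∈𝒢} ξ^g‖₂², taken over families ξ = (ξ^g)_{g∈𝒢} that are dual-feasible at level λ, equals ½‖u‖₂². -/

import Mathlib

open Finset

/-- The ℓ∞-norm of the subvector of `w` indexed by the group `g`
(equal to `max_{j ∈ g} |w j|` for nonempty `g`, and `0` for empty `g`). -/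
noncomputable def gsup {p : ℕ} (g : Finset (Fin p)) (w : Fin p → ℝ) : ℝ :=
  ↑(g.sup fun j => Real.nnabs (w j))

/-- The structured norm `Ω(w) = ∑_{g ∈ 𝒢} η_g ‖w_g‖_∞`. -/
noncomputable def Omega {p : ℕ} (G : Finset (Finset (Fin p)))
    (η : Finset (Fin p) → ℝ) (w : Fin p → ℝ) : ℝ :=
  ∑ g ∈ G, η g * gsup g w

/-- ℓ₁-norm of a vector. -/
def l1 {p : ℕ} (v : Fin p → ℝ) : ℝ := ∑ j, |v j|

/-- A family `ξ = (ξ^g)_{g ∈ 𝒢}` is dual-feasible at level `lam` if `ξ^g_j = 0` for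
`j ∉ g` and `‖ξ^g‖₁ ≤ lam * η_g` for every `g ∈ 𝒢`. -/
def DualFeasible {p : ℕ} (G : Finset (Finset (Fin p))) (η : Finset (Fin p) → ℝ)
    (lam : ℝ) (ξ : Finset (Fin p) → Fin p → ℝ) : Prop :=
  ∀ g ∈ G, (∀ j, j ∉ g → ξ g j = 0) ∧ l1 (ξ g) ≤ lam * η g

/-- Primal (proximal) objective `½‖u − w‖₂² + λ Ω(w)`. -/
noncomputable def proxObj {p : ℕ} (G : Finset (Finset (Fin p)))
    (η : Finset (Fin p) → ℝ) (lam : ℝ) (u w : Fin p → ℝ) : ℝ :=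
  (1/2) * ∑ j, (u j - w j)^2 + lam * Omega G η w

/-- Dual objective `½‖u − ∑_{g} ξ^g‖₂²`. -/
noncomputable def dualObj {p : ℕ} (G : Finset (Finset (Fin p))) (u : Fin p → ℝ)
    (ξ : Finset (Fin p) → Fin p → ℝ) : ℝ :=
  (1/2) * ∑ j, (u j - ∑ g ∈ G, ξ g j)^2

/-! The function `lam * Ω` is the support function of the set `K` of sums `∑ g, ξ g` over
dual-feasible families: by ℓ₁/ℓ∞ duality it is a sum of support functions of ℓ₁-balls, and support
functions turn Minkowski sums into sums. For `z ∈ K` the identity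
`½‖u - w‖² + ⟪w, z⟫ + ½‖u - z‖² = ½‖u‖² + ½‖u - w - z‖²` gives weak duality, and equality holds
when `z` is the projection of `u` onto the closure of `K` and `w = u - z`, since the variational
inequality of the projection says that `z` maximises `⟪w, ·⟫` over that closure. -/

open scoped RealInnerProductSpace Pointwise

theorem isLUB_finsetSum {ι α : Type*} [AddCommGroup α] [PartialOrder α] [IsOrderedAddMonoid α]
    {s : Finset ι} {S : ι → Set α} {a : ι → α} (h : ∀ i ∈ s, IsLUB (S i) (a i)) :
    IsLUB (∑ i ∈ s, S i) (∑ i ∈ s, a i) := by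
  classical
  induction s using Finset.induction_on with
  | empty => exact isLUB_singleton
  | insert i s hi ih =>
    rw [sum_insert hi, sum_insert hi]
    exact (h i (mem_insert_self i s)).add (ih fun j hj => h j (mem_insert_of_mem hj))

section SupportFunction

variable {E : Type*} [NormedAddCommGroup E] [InnerProductSpace ℝ E]

/-- `f` is the support function `w ↦ sup_{z ∈ K} ⟪w, z⟫` of the set `K`. As a real supremum, the
value is only specified for nonempty bounded `K`, so this is stated by `IsLUB` rather than
`sSup`. -/
def IsSupportFunction (K : Set E) (f : E → ℝ) : Prop :=
  ∀ w, IsLUB ((fun z => ⟪w, z⟫) '' K) (f w)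

theorem half_sq_norm_sub_add_inner_add_half_sq_norm_sub (u w z : E) :
    1 / 2 * ‖u - w‖ ^ 2 + ⟪w, z⟫ + 1 / 2 * ‖u - z‖ ^ 2
      = 1 / 2 * ‖u‖ ^ 2 + 1 / 2 * ‖u - w - z‖ ^ 2 := by
  rw [norm_sub_sq_real (u - w) z, norm_sub_sq_real u w, norm_sub_sq_real u z, inner_sub_left]
  ring

theorem exists_mem_closure_forall_inner_le [CompleteSpace E] {K : Set E} (hK : Convex ℝ K)
    (hne : K.Nonempty) (u : E) : ∃ z ∈ closure K, ∀ y ∈ K, ⟪u - z, y⟫ ≤ ⟪u - z, z⟫ := by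
  obtain ⟨z, hz, hmin⟩ := exists_norm_eq_iInf_of_complete_convex hne.closure
    isClosed_closure.isComplete hK.closure u
  refine ⟨z, hz, fun y hy => ?_⟩
  have hle := (norm_eq_iInf_iff_real_inner_le_zero hK.closure hz).mp hmin y (subset_closure hy)
  rwa [inner_sub_right, sub_nonpos] at hle

namespace IsSupportFunction

variable {K : Set E} {f : E → ℝ}

theorem nonempty (hf : IsSupportFunction K f) : K.Nonempty :=
  (hf 0).nonempty.of_image

theorem finsetSum {ι : Type*} {s : Finset ι} {K : ι → Set E} {f : ι → E → ℝ}
    (hf : ∀ i ∈ s, IsSupportFunction (K i) (f i)) :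
    IsSupportFunction (∑ i ∈ s, K i) (fun w => ∑ i ∈ s, f i w) := by
  intro w
  have himage : (fun z => ⟪w, z⟫) '' ∑ i ∈ s, K i = ∑ i ∈ s, (fun z => ⟪w, z⟫) '' K i :=
    Set.image_finsetSum (innerₗ E w) s K
  rw [himage]
  exact isLUB_finsetSum fun i hi => hf i hi w

theorem half_sq_norm_le_prox_add_half_sq_dist (hf : IsSupportFunction K f) (u w : E) {z : E}
    (hz : z ∈ K) :
    1 / 2 * ‖u‖ ^ 2 ≤ 1 / 2 * ‖u - w‖ ^ 2 + f w + 1 / 2 * ‖u - z‖ ^ 2 := by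
  have hinner : ⟪w, z⟫ ≤ f w := (hf w).1 (Set.mem_image_of_mem _ hz)
  have hsq : 0 ≤ ‖u - w - z‖ ^ 2 := sq_nonneg _
  linarith [half_sq_norm_sub_add_inner_add_half_sq_norm_sub u w z]

theorem exists_prox_add_half_sq_dist_le [CompleteSpace E] (hf : IsSupportFunction K f)
    (hK : Convex ℝ K) (u : E) :
    ∃ w, ∃ z ∈ closure K,
      1 / 2 * ‖u - w‖ ^ 2 + f w + 1 / 2 * ‖u - z‖ ^ 2 ≤ 1 / 2 * ‖u‖ ^ 2 := by
  obtain ⟨z, hz, hmax⟩ := exists_mem_closure_forall_inner_le hK hf.nonempty u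
  have hfz : f (u - z) ≤ ⟪u - z, z⟫ := (hf (u - z)).2 (Set.forall_mem_image.mpr hmax)
  have hidentity := half_sq_norm_sub_add_inner_add_half_sq_norm_sub u (u - z) z
  rw [show u - (u - z) - z = 0 by abel, norm_zero] at hidentity
  exact ⟨u - z, z, hz, by linarith⟩

theorem sInf_prox_add_sInf_half_sq_dist [CompleteSpace E] (hf : IsSupportFunction K f)
    (hK : Convex ℝ K) (u : E) :
    sInf (Set.range fun w => 1 / 2 * ‖u - w‖ ^ 2 + f w)
      + sInf ((fun z => 1 / 2 * ‖u - z‖ ^ 2) '' K) = 1 / 2 * ‖u‖ ^ 2 := by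
  set P := Set.range fun w => 1 / 2 * ‖u - w‖ ^ 2 + f w
  set D := (fun z => 1 / 2 * ‖u - z‖ ^ 2) '' K
  have hweak : ∀ a ∈ P, ∀ b ∈ D, 1 / 2 * ‖u‖ ^ 2 ≤ a + b := by
    rintro _ ⟨w, rfl⟩ _ ⟨z, hz, rfl⟩
    exact hf.half_sq_norm_le_prox_add_half_sq_dist u w hz
  have hPne : P.Nonempty := Set.range_nonempty _
  have hDne : D.Nonempty := hf.nonempty.image _
  have hPbdd : BddBelow P := by
    obtain ⟨b, hb⟩ := hDne
    exact ⟨1 / 2 * ‖u‖ ^ 2 - b, fun a ha => sub_le_iff_le_add.mpr (hweak a ha b hb)⟩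
  have hDbdd : BddBelow D := ⟨0, Set.forall_mem_image.mpr fun z _ => by positivity⟩
  apply le_antisymm
  · obtain ⟨w, z, hz, hstrong⟩ := hf.exists_prox_add_half_sq_dist_le hK u
    have hw : sInf P ≤ 1 / 2 * ‖u - w‖ ^ 2 + f w := csInf_le hPbdd (Set.mem_range_self w)
    have hz : sInf D ≤ 1 / 2 * ‖u - z‖ ^ 2 :=
      le_on_closure (g := fun z => 1 / 2 * ‖u - z‖ ^ 2)
        (fun y hy => csInf_le hDbdd (Set.mem_image_of_mem _ hy)) continuousOn_const (by fun_prop) hz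
    linarith
  · rw [← csInf_add hPne hPbdd hDne hDbdd]
    exact le_csInf (hPne.add hDne) (Set.forall_mem_image2.mpr hweak)

end IsSupportFunction

end SupportFunction

section GroupNorm

variable {p : ℕ}

theorem gsup_nonneg (g : Finset (Fin p)) (w : Fin p → ℝ) : 0 ≤ gsup g w :=
  NNReal.coe_nonneg _

theorem abs_le_gsup {g : Finset (Fin p)} {j : Fin p} (hj : j ∈ g) (w : Fin p → ℝ) :
    |w j| ≤ gsup g w := by
  rw [← Real.coe_nnabs]
  exact NNReal.coe_le_coe.mpr (le_sup (f := fun j => Real.nnabs (w j)) hj)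

theorem exists_mem_gsup_eq_abs {g : Finset (Fin p)} (hg : g.Nonempty) (w : Fin p → ℝ) :
    ∃ j ∈ g, gsup g w = |w j| := by
  obtain ⟨j, hj, hsup⟩ := exists_mem_eq_sup g hg fun j => Real.nnabs (w j)
  exact ⟨j, hj, by rw [gsup, hsup, Real.coe_nnabs]⟩

theorem sum_mul_le_l1_mul_gsup {g : Finset (Fin p)} {v : Fin p → ℝ} (hv : ∀ j ∉ g, v j = 0)
    (w : Fin p → ℝ) : ∑ j, v j * w j ≤ l1 v * gsup g w := by
  rw [l1, sum_mul]
  refine sum_le_sum fun j _ => ?_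
  by_cases hj : j ∈ g
  · calc v j * w j ≤ |v j * w j| := le_abs_self _
      _ = |v j| * |w j| := abs_mul _ _
      _ ≤ |v j| * gsup g w := by gcongr; exact abs_le_gsup hj w
  · simp [hv j hj]

theorem convexOn_l1 : ConvexOn ℝ Set.univ (l1 : (Fin p → ℝ) → ℝ) := by
  refine ⟨convex_univ, fun x _ y _ a b ha hb _ => ?_⟩
  simp only [l1, smul_eq_mul, mul_sum, ← sum_add_distrib]
  refine sum_le_sum fun j _ => (abs_add_le _ _).trans_eq ?_
  simp [abs_mul, abs_of_nonneg ha, abs_of_nonneg hb]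

/-- The ℓ₁-ball of radius `r` in the coordinate subspace of the group `g`, i.e. the set of
components `ξ^g` allowed in the dual problem when `r = λ η_g`. It lives in `EuclideanSpace` because
the duality argument uses the ℓ₂ inner product. -/
def groupBall (g : Finset (Fin p)) (r : ℝ) : Set (EuclideanSpace ℝ (Fin p)) :=
  {v | (∀ j, j ∉ g → v j = 0) ∧ l1 v.ofLp ≤ r}

theorem convex_groupBall (g : Finset (Fin p)) (r : ℝ) : Convex ℝ (groupBall g r) := by
  intro x hx y hy a b ha hb hab
  refine ⟨fun j hj => by simp [hx.1 j hj, hy.1 j hj], ?_⟩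
  exact (convexOn_l1.convex_le r ⟨trivial, hx.2⟩ ⟨trivial, hy.2⟩ ha hb hab).2

theorem single_mem_groupBall {g : Finset (Fin p)} {j : Fin p} (hj : j ∈ g) {a r : ℝ}
    (ha : |a| ≤ r) : EuclideanSpace.single j a ∈ groupBall g r := by
  refine ⟨fun i hi => ?_, ?_⟩
  · simp [(ne_of_mem_of_not_mem hj hi).symm]
  · simpa [l1, Pi.single_apply, apply_ite abs] using ha

theorem isSupportFunction_groupBall (g : Finset (Fin p)) {r : ℝ} (hr : 0 ≤ r) :
    IsSupportFunction (groupBall g r) (fun w => r * gsup g w.ofLp) := by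
  refine fun w => IsGreatest.isLUB ⟨?_, ?_⟩
  · obtain rfl | hg := g.eq_empty_or_nonempty
    · exact ⟨0, by simp [groupBall, l1, hr], by simp [gsup]⟩
    · obtain ⟨j, hj, hmax⟩ := exists_mem_gsup_eq_abs hg w.ofLp
      refine ⟨EuclideanSpace.single j (r * SignType.sign (w j)), single_mem_groupBall hj ?_, ?_⟩
      · have hsign : |(SignType.sign (w j) : ℝ)| ≤ 1 := by
          cases SignType.sign (w j) <;> simp
        simpa [abs_mul, abs_of_nonneg hr] using mul_le_mul_of_nonneg_left hsign hr
      · simp [EuclideanSpace.inner_single_right, hmax, mul_assoc]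
  · rintro _ ⟨v, ⟨hsupp, hl1⟩, rfl⟩
    calc ⟪w, v⟫ = ∑ j, v j * w j := PiLp.inner_apply w v
      _ ≤ l1 v.ofLp * gsup g w.ofLp := sum_mul_le_l1_mul_gsup hsupp w.ofLp
      _ ≤ r * gsup g w.ofLp := mul_le_mul_of_nonneg_right hl1 (gsup_nonneg g w.ofLp)

variable (G : Finset (Finset (Fin p))) (η : Finset (Fin p) → ℝ) (lam : ℝ)

theorem isSupportFunction_sum_groupBall (hη : ∀ g ∈ G, 0 ≤ η g) (hlam : 0 ≤ lam) :
    IsSupportFunction (∑ g ∈ G, groupBall g (lam * η g)) (fun w => lam * Omega G η w.ofLp) := by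
  simp only [Omega, mul_sum, ← mul_assoc]
  exact .finsetSum fun g hg => isSupportFunction_groupBall g (mul_nonneg hlam (hη g hg))

theorem setOf_proxObj_eq_range (u : Fin p → ℝ) :
    {v : ℝ | ∃ w : Fin p → ℝ, v = proxObj G η lam u w}
      = Set.range fun w : EuclideanSpace ℝ (Fin p) =>
          1 / 2 * ‖WithLp.toLp 2 u - w‖ ^ 2 + lam * Omega G η w.ofLp := by
  ext v
  simp [(WithLp.equiv 2 (Fin p → ℝ)).exists_congr_left, proxObj, EuclideanSpace.real_norm_sq_eq,
    eq_comm]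

theorem setOf_dualObj_eq_image (u : Fin p → ℝ) :
    {v : ℝ | ∃ ξ : Finset (Fin p) → Fin p → ℝ, DualFeasible G η lam ξ ∧ v = dualObj G u ξ}
      = (fun z : EuclideanSpace ℝ (Fin p) => 1 / 2 * ‖WithLp.toLp 2 u - z‖ ^ 2) ''
          ∑ g ∈ G, groupBall g (lam * η g) := by
  have hobj (ξ : Finset (Fin p) → EuclideanSpace ℝ (Fin p)) :
      1 / 2 * ‖WithLp.toLp 2 u - ∑ g ∈ G, ξ g‖ ^ 2 = dualObj G u fun g => (ξ g).ofLp := by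
    simp [dualObj, EuclideanSpace.real_norm_sq_eq]
  ext v
  simp only [Set.mem_image, Set.mem_finsetSum, Set.mem_ofPred_eq]
  constructor
  · rintro ⟨ξ, hξ, rfl⟩
    exact ⟨_, ⟨fun g => WithLp.toLp 2 (ξ g), fun hg => hξ _ hg, rfl⟩, hobj _⟩
  · rintro ⟨_, ⟨ξ, hξ, rfl⟩, rfl⟩
    exact ⟨fun g => (ξ g).ofLp, fun g hg => hξ hg, hobj ξ⟩

theorem stmt4_general (hη : ∀ g ∈ G, 0 ≤ η g) (hlam : 0 ≤ lam) (u : Fin p → ℝ) :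
    sInf {v : ℝ | ∃ w : Fin p → ℝ, v = proxObj G η lam u w}
      + sInf {v : ℝ | ∃ ξ : Finset (Fin p) → Fin p → ℝ,
          DualFeasible G η lam ξ ∧ v = dualObj G u ξ}
      = (1/2) * ∑ j, (u j)^2 := by
  have hconvex : Convex ℝ (∑ g ∈ G, groupBall g (lam * η g)) :=
    convex_sum _ fun g _ => convex_groupBall g _
  rw [setOf_proxObj_eq_range, setOf_dualObj_eq_image,
    (isSupportFunction_sum_groupBall G η lam hη hlam).sInf_prox_add_sInf_half_sq_dist hconvex,
    EuclideanSpace.real_norm_sq_eq]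

end GroupNorm

/-- strong duality — the optimal primal (proximal) value plus the optimal
dual value equals `½‖u‖₂²`. -/
theorem stmt4 {p : ℕ} (G : Finset (Finset (Fin p))) (η : Finset (Fin p) → ℝ)
    (hne : ∀ g ∈ G, g.Nonempty) (hη : ∀ g ∈ G, 0 < η g)
    (hcover : ∀ j : Fin p, ∃ g ∈ G, j ∈ g)
    (lam : ℝ) (hlam : 0 < lam) (u : Fin p → ℝ) :
    sInf {v : ℝ | ∃ w : Fin p → ℝ, v = proxObj G η lam u w}
      + sInf {v : ℝ | ∃ ξ : Finset (Fin p) → Fin p → ℝ,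
          DualFeasible G η lam ξ ∧ v = dualObj G u ξ}
      = (1/2) * ∑ j, (u j)^2 :=
  stmt4_general G η lam (fun g hg => (hη g hg).le) hlam.le u
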